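/- (Theorem 3.) If the joint distribution p_XY and the function g satisfy H(g(X,Y)) < I(X;Y), then for any functions f₁ and f₂ on 𝒳×𝒴 with finite ranges, the tuple (p_XY, f₁, f₂, g) is asymptotically securely computable with privacy against an eavesdropper. -/

import Mathlib

open scoped BigOperators

/-- A probability mass function on a finite type, given as a real-valued function. -/
def IsPMF {Ω : Type*} [Fintype Ω] (p : Ω → ℝ) : Prop :=
  (∀ ω, 0 ≤ p ω) ∧ ∑ ω, p ω = 1

open Classical in
/-- Probability of an event under a pmf on a finite type. -/
noncomputable def probOf {Ω : Type*} [Fintype Ω] (p : Ω → ℝ) (E : Ω → Prop) : ℝ :=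
  ∑ ω, if E ω then p ω else 0

/-- Distribution (pushforward) of a random variable `A` under pmf `p`. -/
noncomputable def distOf {Ω β : Type*} [Fintype Ω] [DecidableEq β]
    (p : Ω → ℝ) (A : Ω → β) : β → ℝ :=
  fun b => ∑ ω, if A ω = b then p ω else 0

/-- Shannon entropy (in nats) of a distribution on a finite type. -/
noncomputable def entD {β : Type*} [Fintype β] (q : β → ℝ) : ℝ :=
  -∑ b, q b * Real.log (q b)

/-- Shannon entropy H(A) of a random variable `A` under pmf `p`. -/
noncomputable def entRV {Ω β : Type*} [Fintype Ω] [Fintype β] [DecidableEq β]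
    (p : Ω → ℝ) (A : Ω → β) : ℝ :=
  entD (distOf p A)

/-- Conditional Shannon entropy H(A | C). -/
noncomputable def condEnt {Ω β γ : Type*} [Fintype Ω] [Fintype β] [DecidableEq β]
    [Fintype γ] [DecidableEq γ] (p : Ω → ℝ) (A : Ω → β) (C : Ω → γ) : ℝ :=
  entRV p (fun ω => (A ω, C ω)) - entRV p C

/-- Mutual information I(A; B). -/
noncomputable def mutInfo {Ω β γ : Type*} [Fintype Ω] [Fintype β] [DecidableEq β]
    [Fintype γ] [DecidableEq γ] (p : Ω → ℝ) (A : Ω → β) (B : Ω → γ) : ℝ :=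
  entRV p A + entRV p B - entRV p (fun ω => (A ω, B ω))

/-- Conditional mutual information I(A; B | C). -/
noncomputable def condMutInfo {Ω β γ δ : Type*} [Fintype Ω] [Fintype β] [DecidableEq β]
    [Fintype γ] [DecidableEq γ] [Fintype δ] [DecidableEq δ]
    (p : Ω → ℝ) (A : Ω → β) (B : Ω → γ) (C : Ω → δ) : ℝ :=
  entRV p (fun ω => (A ω, C ω)) + entRV p (fun ω => (B ω, C ω))
    - entRV p (fun ω => (A ω, B ω, C ω)) - entRV p C

/-- Privacy against Alice with respect to `g` of a transition kernel `k(m|x,y)`,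
for the function `f` being computed. -/
def PrivAlice {𝒳 𝒴 𝒵 𝒢 ℳ : Type*} (f : 𝒳 → 𝒴 → 𝒵) (g : 𝒳 → 𝒴 → 𝒢)
    (k : 𝒳 → 𝒴 → ℳ → ℝ) : Prop :=
  ∀ x y₁ y₂, g x y₁ ≠ g x y₂ → f x y₁ = f x y₂ → ∀ m, k x y₁ m = k x y₂ m

/-- Privacy against Bob with respect to `h` of a transition kernel `k(m|x,y)`,
for the function `f` being computed. -/
def PrivBob {𝒳 𝒴 𝒵 ℋ ℳ : Type*} (f : 𝒳 → 𝒴 → 𝒵) (h : 𝒳 → 𝒴 → ℋ)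
    (k : 𝒳 → 𝒴 → ℳ → ℝ) : Prop :=
  ∀ x₁ x₂ y, h x₁ y ≠ h x₂ y → f x₁ y = f x₂ y → ∀ m, k x₁ y m = k x₂ y m

/-- Transcript probability `p(m₁,…,m_t | x, y)` of an alternating interactive protocol with
`t` rounds and message alphabet `Fin mM`; Alice sends on even-indexed rounds (rounds
`0, 2, 4, …`, i.e. the 1st, 3rd, … messages) and Bob on odd-indexed rounds, each message
depending only on the sender's input and the past messages. -/
noncomputable def transProb {𝒳 𝒴 : Type*} {t mM : ℕ}
    (alice : ∀ i : Fin t, 𝒳 → (Fin i.val → Fin mM) → Fin mM → ℝ)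
    (bob : ∀ i : Fin t, 𝒴 → (Fin i.val → Fin mM) → Fin mM → ℝ)
    (x : 𝒳) (y : 𝒴) (m : Fin t → Fin mM) : ℝ :=
  ∏ i : Fin t,
    if i.val % 2 = 0 then alice i x (fun j => m (Fin.castLE i.isLt.le j)) (m i)
    else bob i y (fun j => m (Fin.castLE i.isLt.le j)) (m i)

/-- The relation `x₁ ∼ x₂` on `C` (relative to the submatrix `C × D`):
there is `y ∈ D` with `g x₁ y ≠ g x₂ y` and `f x₁ y = f x₂ y`. -/
def simX {𝒳 𝒴 𝒵 𝒢 : Type*} (f : 𝒳 → 𝒴 → 𝒵) (g : 𝒳 → 𝒴 → 𝒢)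
    (C : Set 𝒳) (D : Set 𝒴) (x₁ x₂ : 𝒳) : Prop :=
  x₁ ∈ C ∧ x₂ ∈ C ∧ ∃ y ∈ D, g x₁ y ≠ g x₂ y ∧ f x₁ y = f x₂ y

/-- The relation `y₁ ∼ y₂` on `D` (relative to the submatrix `C × D`):
there is `x ∈ C` with `h x y₁ ≠ h x y₂` and `f x y₁ = f x y₂`. -/
def simY {𝒳 𝒴 𝒵 ℋ : Type*} (f : 𝒳 → 𝒴 → 𝒵) (h : 𝒳 → 𝒴 → ℋ)
    (C : Set 𝒳) (D : Set 𝒴) (y₁ y₂ : 𝒴) : Prop :=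
  y₁ ∈ D ∧ y₂ ∈ D ∧ ∃ x ∈ C, h x y₁ ≠ h x y₂ ∧ f x y₁ = f x y₂

/-- The submatrix `C × D` of the matrix `R = (f(x,y))` is monochromatic: `f` is constant
on `C × D`. -/
def Monochromatic {𝒳 𝒴 𝒵 : Type*} (f : 𝒳 → 𝒴 → 𝒵) (C : Set 𝒳) (D : Set 𝒴) : Prop :=
  ∀ x₁ ∈ C, ∀ y₁ ∈ D, ∀ x₂ ∈ C, ∀ y₂ ∈ D, f x₁ y₁ = f x₂ y₂

/-- The submatrix `C × D` is forbidden: it is not monochromatic, all elements of `C` are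
equivalent under the reflexive-transitive closure of `∼` on `C`, and all elements of `D`
are equivalent under the reflexive-transitive closure of `∼` on `D`. -/
def Forbidden {𝒳 𝒴 𝒵 𝒢 ℋ : Type*} (f : 𝒳 → 𝒴 → 𝒵) (g : 𝒳 → 𝒴 → 𝒢) (h : 𝒳 → 𝒴 → ℋ)
    (C : Set 𝒳) (D : Set 𝒴) : Prop :=
  ¬ Monochromatic f C D ∧
  (∀ x₁ ∈ C, ∀ x₂ ∈ C, Relation.ReflTransGen (simX f g C D) x₁ x₂) ∧
  (∀ y₁ ∈ D, ∀ y₂ ∈ D, Relation.ReflTransGen (simY f h C D) y₁ y₂)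

/-- Joint law of `(XYⁿ, transcript, Z₁ⁿ, Z₂ⁿ)` induced by `n` i.i.d. copies of `pXY`, an
alternating interactive protocol with `r` rounds and message alphabet `Fin mM` on the
block inputs, and the users' output kernels. -/
noncomputable def jointEaves {𝒳 𝒴 𝒵₁ 𝒵₂ : Type} (pXY : 𝒳 × 𝒴 → ℝ) (n r mM : ℕ)
    (alice : ∀ i : Fin r, (Fin n → 𝒳) → (Fin i.val → Fin mM) → Fin mM → ℝ)
    (bob : ∀ i : Fin r, (Fin n → 𝒴) → (Fin i.val → Fin mM) → Fin mM → ℝ)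
    (outA : (Fin n → 𝒳) → (Fin r → Fin mM) → (Fin n → 𝒵₁) → ℝ)
    (outB : (Fin n → 𝒴) → (Fin r → Fin mM) → (Fin n → 𝒵₂) → ℝ) :
    (Fin n → 𝒳 × 𝒴) × (Fin r → Fin mM) × (Fin n → 𝒵₁) × (Fin n → 𝒵₂) → ℝ :=
  fun ω => (∏ i, pXY (ω.1 i)) *
    transProb alice bob (fun i => (ω.1 i).1) (fun i => (ω.1 i).2) ω.2.1 *
    outA (fun i => (ω.1 i).1) ω.2.1 ω.2.2.1 *
    outB (fun i => (ω.1 i).2) ω.2.1 ω.2.2.2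

/-- The tuple `(pXY, f₁, f₂, g)` is asymptotically securely computable with privacy
against an eavesdropper: for every `ε > 0` there are a blocklength `n` and an interactive
protocol with outputs such that `P((Z₁ⁿ, Z₂ⁿ) ≠ (F₁ⁿ, F₂ⁿ)) ≤ ε` and
`I(M; Gⁿ) ≤ n ε`, where `M` is the transcript. -/
def AsympSecEavesdropper {𝒳 𝒴 𝒵₁ 𝒵₂ 𝒢 : Type}
    [Fintype 𝒳] [DecidableEq 𝒳] [Fintype 𝒴] [DecidableEq 𝒴]
    [Fintype 𝒵₁] [DecidableEq 𝒵₁] [Fintype 𝒵₂] [DecidableEq 𝒵₂]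
    [Fintype 𝒢] [DecidableEq 𝒢]
    (pXY : 𝒳 × 𝒴 → ℝ) (f₁ : 𝒳 → 𝒴 → 𝒵₁) (f₂ : 𝒳 → 𝒴 → 𝒵₂) (g : 𝒳 → 𝒴 → 𝒢) : Prop :=
  ∀ ε : ℝ, 0 < ε → ∃ (n r mM : ℕ), 0 < n ∧
    ∃ (alice : ∀ i : Fin r, (Fin n → 𝒳) → (Fin i.val → Fin mM) → Fin mM → ℝ)
      (bob : ∀ i : Fin r, (Fin n → 𝒴) → (Fin i.val → Fin mM) → Fin mM → ℝ)
      (outA : (Fin n → 𝒳) → (Fin r → Fin mM) → (Fin n → 𝒵₁) → ℝ)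
      (outB : (Fin n → 𝒴) → (Fin r → Fin mM) → (Fin n → 𝒵₂) → ℝ),
      (∀ (i : Fin r) (xv : Fin n → 𝒳) (past : Fin i.val → Fin mM),
          (∀ m, 0 ≤ alice i xv past m) ∧ ∑ m, alice i xv past m = 1) ∧
      (∀ (i : Fin r) (yv : Fin n → 𝒴) (past : Fin i.val → Fin mM),
          (∀ m, 0 ≤ bob i yv past m) ∧ ∑ m, bob i yv past m = 1) ∧
      (∀ (xv : Fin n → 𝒳) (m : Fin r → Fin mM),
          (∀ z, 0 ≤ outA xv m z) ∧ ∑ z, outA xv m z = 1) ∧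
      (∀ (yv : Fin n → 𝒴) (m : Fin r → Fin mM),
          (∀ z, 0 ≤ outB yv m z) ∧ ∑ z, outB yv m z = 1) ∧
      probOf (jointEaves pXY n r mM alice bob outA outB)
        (fun ω => (ω.2.2.1, ω.2.2.2) ≠
          ((fun i => f₁ (ω.1 i).1 (ω.1 i).2), (fun i => f₂ (ω.1 i).1 (ω.1 i).2))) ≤ ε ∧
      mutInfo (jointEaves pXY n r mM alice bob outA outB)
        (fun ω => ω.2.1)
        (fun ω => fun i => g (ω.1 i).1 (ω.1 i).2) ≤ n * ε

/-!
Each user announces a random bin index of its own block, at rates slightly above `H(X|Y)` and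
`H(Y|X)`. By Slepian–Wolf decoding each of them recovers the block of the other one, after which
any pair of functions can be evaluated. Since `H(G) < I(X; Y)`, these rates can be taken below
`H(X|G)` and `H(Y|G)`, with sum below `H(X, Y|G)`. The pair of bin indices is then nearly uniform
given `Gⁿ`: averaged over the binnings and bounded by Jensen's inequality, its conditional entropy
falls short of the maximum by an amount that stays bounded in the block length. One fixed pair of
binnings therefore has small error probability and leaks `o(n)` about `Gⁿ`.
-/

section RandomBinning

open Finset Real

section Mean

variable {V : Type*} [Fintype V]

/-- The expectation of a real random variable `s` under the weights `p`. -/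
noncomputable def mean (p s : V → ℝ) : ℝ := ∑ v, p v * s v

lemma mean_add (p s t : V → ℝ) : mean p (fun v => s v + t v) = mean p s + mean p t := by
  simp only [mean, mul_add, sum_add_distrib]

lemma mean_sub (p s t : V → ℝ) : mean p (fun v => s v - t v) = mean p s - mean p t := by
  simp only [mean, mul_sub, sum_sub_distrib]

lemma mean_neg (p s : V → ℝ) : mean p (fun v => -s v) = -mean p s := by
  simp only [mean, mul_neg, sum_neg_distrib]

lemma mean_const_mul (p s : V → ℝ) (c : ℝ) : mean p (fun v => c * s v) = c * mean p s := by
  simp only [mean, mul_left_comm _ c, mul_sum]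

lemma mean_mono {p s t : V → ℝ} (hp : ∀ v, 0 ≤ p v) (h : ∀ v, 0 < p v → s v ≤ t v) :
    mean p s ≤ mean p t := by
  refine sum_le_sum fun v _ => ?_
  rcases (hp v).eq_or_lt with hv | hv
  · simp [← hv]
  · exact mul_le_mul_of_nonneg_left (h v hv) hv.le

lemma mean_congr {p s t : V → ℝ} (hp : ∀ v, 0 ≤ p v) (h : ∀ v, 0 < p v → s v = t v) :
    mean p s = mean p t :=
  le_antisymm (mean_mono hp fun v hv => (h v hv).le) (mean_mono hp fun v hv => (h v hv).ge)

lemma IsPMF.mean_const {p : V → ℝ} (hp : IsPMF p) (c : ℝ) : mean p (fun _ => c) = c := by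
  rw [mean, ← sum_mul, hp.2, one_mul]

lemma IsPMF.nonempty {p : V → ℝ} (hp : IsPMF p) : Nonempty V := by
  by_contra h
  rw [not_nonempty_iff] at h
  simpa using hp.2

lemma expect_mean_comm {K : Type*} [Fintype K] (p : V → ℝ) (s : K → V → ℝ) :
    𝔼 k, mean p (s k) = mean p fun v => 𝔼 k, s k v := by
  simp only [mean, expect_sum_comm, mul_expect]

open Classical in
lemma probOf_eq_mean (p : V → ℝ) (E : V → Prop) :
    probOf p E = mean p fun v => if E v then 1 else 0 := by
  simp only [probOf, mean, mul_ite, mul_one, mul_zero]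

lemma probOf_mono {p : V → ℝ} (hp : ∀ v, 0 ≤ p v) {E F : V → Prop}
    (h : ∀ v, 0 < p v → E v → F v) : probOf p E ≤ probOf p F := by
  classical
  rw [probOf_eq_mean, probOf_eq_mean]
  refine mean_mono hp fun v hv => ?_
  by_cases hE : E v
  · simp [hE, h v hv hE]
  · rw [if_neg hE]
    positivity

lemma probOf_nonneg {p : V → ℝ} (hp : ∀ v, 0 ≤ p v) (E : V → Prop) : 0 ≤ probOf p E :=
  sum_nonneg fun v _ => by split_ifs <;> simp [hp]

lemma probOf_or_le {p : V → ℝ} (hp : ∀ v, 0 ≤ p v) (E F : V → Prop) :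
    probOf p (fun v => E v ∨ F v) ≤ probOf p E + probOf p F := by
  classical
  simp only [probOf_eq_mean, ← mean_add]
  refine mean_mono hp fun v _ => ?_
  by_cases hE : E v <;> by_cases hF : F v <;> simp [hE, hF]

/-- **Markov's inequality**. -/
lemma mul_probOf_le_mean {p s : V → ℝ} (hp : ∀ v, 0 ≤ p v) (hs : ∀ v, 0 ≤ s v) {c : ℝ}
    {E : V → Prop} (h : ∀ v, E v → c ≤ s v) : c * probOf p E ≤ mean p s := by
  classical
  rw [probOf_eq_mean, ← mean_const_mul]
  refine mean_mono hp fun v _ => ?_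
  by_cases hE : E v
  · simp [hE, h v hE]
  · simp [hE, hs v]

end Mean

section Entropy

variable {V α β γ κ : Type*} [Fintype V]
variable [DecidableEq α] [DecidableEq β] [DecidableEq γ] [DecidableEq κ]

lemma distOf_nonneg {P : V → ℝ} (hP : ∀ v, 0 ≤ P v) (A : V → α) (a : α) : 0 ≤ distOf P A a :=
  sum_nonneg fun v _ => by split_ifs <;> simp [hP]

lemma le_distOf {P : V → ℝ} (hP : ∀ v, 0 ≤ P v) (A : V → α) (v : V) : P v ≤ distOf P A (A v) := by
  simpa [distOf] using single_le_sum (f := fun w => if A w = A v then P w else 0)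
    (fun w _ => by split_ifs <;> simp [hP]) (mem_univ v)

lemma distOf_pos {P : V → ℝ} (hP : ∀ v, 0 ≤ P v) (A : V → α) {v : V} (hv : 0 < P v) :
    0 < distOf P A (A v) :=
  hv.trans_le (le_distOf hP A v)

lemma distOf_congr (P : V → ℝ) {A : V → α} {B : V → β} {v : V}
    (h : ∀ w, A w = A v ↔ B w = B v) : distOf P A (A v) = distOf P B (B v) := by
  simp only [distOf, h]

lemma distOf_le_distOf_of_imp {P : V → ℝ} (hP : ∀ v, 0 ≤ P v) {A : V → α} {B : V → β} {v : V}
    (h : ∀ w, A w = A v → B w = B v) : distOf P A (A v) ≤ distOf P B (B v) := by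
  refine sum_le_sum fun w _ => ?_
  by_cases hw : A w = A v
  · simp [hw, h w hw]
  · rw [if_neg hw]
    split_ifs <;> simp [hP]

lemma sum_distOf_mul [Fintype α] (P : V → ℝ) (A : V → α) (F : α → ℝ) :
    ∑ a, distOf P A a * F a = mean P fun v => F (A v) := by
  simp only [distOf, mean, sum_mul]
  rw [sum_comm]
  simp [ite_mul]

lemma sum_distOf [Fintype α] (P : V → ℝ) (A : V → α) : ∑ a, distOf P A a = ∑ v, P v := by
  simpa [mean] using sum_distOf_mul P A fun _ => 1

lemma sum_distOf_prod_mk [Fintype α] (P : V → ℝ) (A : V → α) (B : V → β) (b : β) :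
    ∑ a, distOf P (fun v => (A v, B v)) (a, b) = distOf P B b := by
  simp only [distOf, Prod.mk.injEq, ite_and]
  rw [sum_comm]
  simp

/-- The surprisal `-log P(A = A v)` of the outcome `v` as seen through `A`; its mean is the
entropy of `A`. -/
noncomputable def surprisal (P : V → ℝ) (A : V → α) (v : V) : ℝ := -log (distOf P A (A v))

/-- The conditional surprisal `-log P(A = A v | C = C v)`, written as a difference of surprisals;
its mean is the conditional entropy of `A` given `C`. -/
noncomputable def condSurprisal (P : V → ℝ) (A : V → α) (C : V → γ) (v : V) : ℝ :=
  surprisal P (fun w => (A w, C w)) v - surprisal P C v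

lemma surprisal_congr (P : V → ℝ) {A : V → α} {B : V → β} (h : ∀ v w, A v = A w ↔ B v = B w) :
    surprisal P A = surprisal P B :=
  funext fun v => by rw [surprisal, surprisal, distOf_congr P fun w => h w v]

lemma distOf_eq_exp_neg_surprisal {P : V → ℝ} (hP : ∀ v, 0 ≤ P v) (A : V → α) {v : V}
    (hv : 0 < P v) : distOf P A (A v) = exp (-surprisal P A v) := by
  rw [surprisal, neg_neg, exp_log (distOf_pos hP A hv)]

lemma distOf_prod_mk_eq {P : V → ℝ} (hP : ∀ v, 0 ≤ P v) (A : V → α) (C : V → γ) {v : V}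
    (hv : 0 < P v) :
    distOf P (fun w => (A w, C w)) (A v, C v) =
      exp (-condSurprisal P A C v) * distOf P C (C v) := by
  rw [distOf_eq_exp_neg_surprisal hP C hv, ← exp_add,
    distOf_eq_exp_neg_surprisal hP (fun w => (A w, C w)) hv]
  congr 1
  rw [condSurprisal]
  ring

variable [Fintype α] [Fintype β] [Fintype γ] [Fintype κ]

lemma entRV_eq_mean_surprisal (P : V → ℝ) (A : V → α) : entRV P A = mean P (surprisal P A) := by
  rw [entRV, entD, sum_distOf_mul P A fun a => log (distOf P A a), ← mean_neg]
  rfl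

lemma condEnt_eq_mean_condSurprisal (P : V → ℝ) (A : V → α) (C : V → γ) :
    condEnt P A C = mean P (condSurprisal P A C) := by
  rw [condEnt, entRV_eq_mean_surprisal, entRV_eq_mean_surprisal, ← mean_sub]
  rfl

lemma entRV_congr (P : V → ℝ) {A : V → α} {B : V → β} (h : ∀ v w, A v = A w ↔ B v = B w) :
    entRV P A = entRV P B := by
  rw [entRV_eq_mean_surprisal, entRV_eq_mean_surprisal, surprisal_congr P h]

lemma mutInfo_congr_left (P : V → ℝ) {A : V → α} {B : V → β} (C : V → γ)
    (h : ∀ v w, A v = A w ↔ B v = B w) : mutInfo P A C = mutInfo P B C := by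
  rw [mutInfo, mutInfo, entRV_congr P h,
    entRV_congr P (A := fun v => (A v, C v)) (B := fun v => (B v, C v)) fun v w => by
      simp only [Prod.mk.injEq, h]]

lemma entRV_le_entRV_of_imp {P : V → ℝ} (hP : ∀ v, 0 ≤ P v) {A : V → α} {B : V → β}
    (h : ∀ v w, A v = A w → B v = B w) : entRV P B ≤ entRV P A := by
  rw [entRV_eq_mean_surprisal, entRV_eq_mean_surprisal]
  exact mean_mono hP fun v hv => neg_le_neg <|
    log_le_log (distOf_pos hP A hv) (distOf_le_distOf_of_imp hP fun w => h w v)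

lemma condEnt_nonneg {P : V → ℝ} (hP : ∀ v, 0 ≤ P v) (A : V → α) (C : V → γ) :
    0 ≤ condEnt P A C :=
  sub_nonneg.2 <| entRV_le_entRV_of_imp hP fun _ _ h => (Prod.ext_iff.1 h).2

/-- **Gibbs' inequality**. -/
lemma IsPMF.entRV_le_mean_neg_log {P : V → ℝ} (hP : IsPMF P) (A : V → α) {r : α → ℝ}
    (hr : ∀ a, 0 ≤ r a) (hr_sum : ∑ a, r a ≤ 1) (hr_pos : ∀ v, 0 < P v → 0 < r (A v)) :
    entRV P A ≤ mean P fun v => -log (r (A v)) := by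
  rw [entRV_eq_mean_surprisal, ← sub_nonpos, ← mean_sub]
  calc mean P (fun v => surprisal P A v - -log (r (A v)))
      ≤ mean P (fun v => r (A v) / distOf P A (A v) - 1) := mean_mono hP.1 fun v hv => by
        have hA := distOf_pos hP.1 A hv
        have := log_le_sub_one_of_pos (div_pos (hr_pos v hv) hA)
        rw [log_div (hr_pos v hv).ne' hA.ne'] at this
        rw [surprisal]
        linarith
    _ = ∑ a, distOf P A a * (r a / distOf P A a) - 1 := by
        rw [mean_sub, hP.mean_const, sum_distOf_mul P A fun a => r a / distOf P A a]
    _ ≤ ∑ a, r a - 1 := by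
        gcongr with a
        rcases (distOf_nonneg hP.1 A a).eq_or_lt with h | h
        · simp [← h, hr a]
        · rw [mul_div_cancel₀ _ h.ne']
    _ ≤ 0 := sub_nonpos.2 hr_sum

lemma IsPMF.entRV_le_log_card {P : V → ℝ} (hP : IsPMF P) (U : V → κ) :
    entRV P U ≤ log (Fintype.card κ) := by
  obtain ⟨v⟩ := hP.nonempty
  have hκ : (0 : ℝ) < Fintype.card κ := by exact_mod_cast Fintype.card_pos_iff.2 ⟨U v⟩
  have := hP.entRV_le_mean_neg_log U (r := fun _ => (Fintype.card κ : ℝ)⁻¹)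
    (fun _ => by positivity) (by simp [hκ.ne']) fun _ _ => by positivity
  simpa [hP.mean_const] using this

lemma IsPMF.condEnt_le_entRV {P : V → ℝ} (hP : IsPMF P) (A : V → α) (C : V → γ) :
    condEnt P A C ≤ entRV P A := by
  have := hP.entRV_le_mean_neg_log (fun v => (A v, C v))
    (r := fun ac => distOf P A ac.1 * distOf P C ac.2)
    (fun ac => mul_nonneg (distOf_nonneg hP.1 A _) (distOf_nonneg hP.1 C _))
    (by simp [Fintype.sum_prod_type, ← mul_sum, sum_distOf, hP.2])
    fun v hv => mul_pos (distOf_pos hP.1 A hv) (distOf_pos hP.1 C hv)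
  have hsplit : mean P (fun v => -log (distOf P A (A v) * distOf P C (C v))) =
      entRV P A + entRV P C := by
    rw [entRV_eq_mean_surprisal, entRV_eq_mean_surprisal, ← mean_add]
    refine mean_congr hP.1 fun v hv => ?_
    rw [log_mul (distOf_pos hP.1 A hv).ne' (distOf_pos hP.1 C hv).ne', surprisal, surprisal]
    ring
  rw [condEnt]
  linarith

end Entropy

section Binning

variable {V α β κ : Type*} [Fintype V] [Fintype α] [DecidableEq α] [DecidableEq β]

open Classical in
/-- The outcomes `a` of `A` whose conditional probability given `B = b` is at least `exp (-t)`. -/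
noncomputable def likelyGiven (P : V → ℝ) (A : V → α) (B : V → β) (t : ℝ) (b : β) : Finset α :=
  {a | exp (-t) * distOf P B b ≤ distOf P (fun v => (A v, B v)) (a, b)}

/-- The decoder of Slepian–Wolf binning: given the side information `b` and the bin index `m`, it
returns some outcome of bin `m` which is likely given `b`, and an arbitrary value if there is
none. -/
noncomputable def binDecoder [Nonempty α] (P : V → ℝ) (A : V → α) (B : V → β) (t : ℝ) (k : α → κ)
    (b : β) (m : κ) : α :=
  Classical.epsilon fun a => a ∈ likelyGiven P A B t b ∧ k a = m

lemma mem_likelyGiven {P : V → ℝ} (hP : ∀ v, 0 ≤ P v) {A : V → α} {B : V → β} {t : ℝ} {v : V}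
    (hv : 0 < P v) (ht : condSurprisal P A B v ≤ t) : A v ∈ likelyGiven P A B t (B v) := by
  classical
  rw [likelyGiven, mem_filter_univ, distOf_prod_mk_eq hP A B hv]
  exact mul_le_mul_of_nonneg_right (exp_le_exp.2 (neg_le_neg ht)) (distOf_nonneg hP B _)

lemma card_likelyGiven_le {P : V → ℝ} (hP : ∀ v, 0 ≤ P v) (A : V → α) (B : V → β) (t : ℝ)
    {b : β} (hb : 0 < distOf P B b) : (#(likelyGiven P A B t b) : ℝ) ≤ exp t := by
  have hcard : #(likelyGiven P A B t b) * (exp (-t) * distOf P B b) ≤ 1 * distOf P B b := by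
    calc #(likelyGiven P A B t b) * (exp (-t) * distOf P B b)
        ≤ ∑ a ∈ likelyGiven P A B t b, distOf P (fun v => (A v, B v)) (a, b) := by
          rw [← nsmul_eq_mul]
          exact card_nsmul_le_sum _ _ _ fun a ha => by simpa [likelyGiven] using ha
      _ ≤ ∑ a, distOf P (fun v => (A v, B v)) (a, b) :=
          sum_le_univ_sum_of_nonneg fun a => distOf_nonneg hP _ _
      _ = 1 * distOf P B b := by rw [sum_distOf_prod_mk, one_mul]
  rw [← mul_assoc, mul_le_mul_iff_left₀ hb, exp_neg, mul_inv_le_iff₀ (exp_pos t)] at hcard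
  simpa using hcard

lemma exists_likely_collision_of_binDecoder_ne [Nonempty α] {P : V → ℝ} {A : V → α} {B : V → β}
    {t : ℝ} {k : α → κ} {v : V} (hlikely : A v ∈ likelyGiven P A B t (B v))
    (herr : binDecoder P A B t k (B v) (k (A v)) ≠ A v) :
    ∃ a ∈ (likelyGiven P A B t (B v)).erase (A v), k a = k (A v) := by
  have hspec := Classical.epsilon_spec
    (p := fun a => a ∈ likelyGiven P A B t (B v) ∧ k a = k (A v)) ⟨A v, hlikely, rfl⟩
  exact ⟨_, mem_erase.2 ⟨herr, hspec.1⟩, hspec.2⟩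

variable [Fintype κ] [Nonempty κ]

lemma expect_collision_of_ne [DecidableEq κ] {a a' : α} (h : a ≠ a') :
    𝔼 k : α → κ, (if k a = k a' then (1 : ℝ) else 0) = (Fintype.card κ : ℝ)⁻¹ := by
  calc 𝔼 k : α → κ, (if k a = k a' then (1 : ℝ) else 0)
      = 𝔼 c : κ × ({b // b ≠ a} → κ), if c.1 = c.2 ⟨a', h.symm⟩ then (1 : ℝ) else 0 :=
        Fintype.expect_equiv (Equiv.funSplitAt a κ) _ _ fun k => by simp
    _ = (Fintype.card κ : ℝ)⁻¹ := by
        rw [← univ_product_univ, expect_product, expect_comm]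
        simp

lemma expect_collision_le [DecidableEq κ] (a a' : α) :
    𝔼 k : α → κ, (if k a = k a' then (1 : ℝ) else 0) ≤
      (if a = a' then 1 else 0) + (Fintype.card κ : ℝ)⁻¹ := by
  rcases eq_or_ne a a' with rfl | h
  · simp
  · simp [expect_collision_of_ne h, h]

open Classical in
lemma expect_binDecoder_ne_le [Nonempty α] {P : V → ℝ} (hP : ∀ v, 0 ≤ P v) (A : V → α)
    (B : V → β) (t : ℝ) {v : V} (hv : 0 < P v) :
    𝔼 k : α → κ, (if binDecoder P A B t k (B v) (k (A v)) ≠ A v then (1 : ℝ) else 0) ≤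
      (if t < condSurprisal P A B v then 1 else 0) + exp t / Fintype.card κ := by
  have hrest : 0 ≤ exp t / Fintype.card κ := by positivity
  split_ifs with ht
  · refine (expect_le univ_nonempty fun k _ => ?_).trans (le_add_of_nonneg_right hrest)
    split_ifs <;> norm_num
  have hlikely := mem_likelyGiven hP hv (not_lt.1 ht)
  calc 𝔼 k : α → κ, (if binDecoder P A B t k (B v) (k (A v)) ≠ A v then (1 : ℝ) else 0)
      ≤ 𝔼 k : α → κ, ∑ a ∈ (likelyGiven P A B t (B v)).erase (A v),
          if k a = k (A v) then (1 : ℝ) else 0 := by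
        refine expect_le_expect fun k _ => ?_
        have hnonneg : ∀ a ∈ (likelyGiven P A B t (B v)).erase (A v),
            (0 : ℝ) ≤ if k a = k (A v) then 1 else 0 := fun a _ => by positivity
        split_ifs with herr
        · obtain ⟨a, ha, hka⟩ := exists_likely_collision_of_binDecoder_ne hlikely herr
          simpa [hka] using single_le_sum hnonneg ha
        · exact sum_nonneg hnonneg
    _ = #((likelyGiven P A B t (B v)).erase (A v)) * (Fintype.card κ : ℝ)⁻¹ := by
        rw [expect_sum_comm, sum_congr rfl fun a ha => expect_collision_of_ne (ne_of_mem_erase ha),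
          sum_const, nsmul_eq_mul]
    _ ≤ exp t * (Fintype.card κ : ℝ)⁻¹ := by
        gcongr
        exact (Nat.cast_le.2 (card_le_card (erase_subset _ _))).trans
          (card_likelyGiven_le hP A B t (distOf_pos hP B hv))
    _ = 0 + exp t / Fintype.card κ := by rw [zero_add, div_eq_mul_inv]

/-- **Slepian–Wolf binning**, one-shot form. -/
lemma IsPMF.expect_probOf_binDecoder_ne_le [Nonempty α] {P : V → ℝ} (hP : IsPMF P) (A : V → α)
    (B : V → β) (t : ℝ) :
    𝔼 k : α → κ, probOf P (fun v => binDecoder P A B t k (B v) (k (A v)) ≠ A v) ≤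
      probOf P (fun v => t < condSurprisal P A B v) + exp t / Fintype.card κ := by
  classical
  rw [← hP.mean_const (exp t / Fintype.card κ)]
  simp only [probOf_eq_mean]
  rw [expect_mean_comm, ← mean_add]
  refine mean_mono hP.1 fun v hv => ?_
  convert expect_binDecoder_ne_le (κ := κ) hP.1 A B t hv

end Binning

section Secrecy

lemma expect_log_le_log_expect {K : Type*} [Fintype K] [Nonempty K] {s : K → ℝ}
    (hs : ∀ k, 0 < s k) : 𝔼 k, log (s k) ≤ log (𝔼 k, s k) := by
  have hE : 0 < 𝔼 k, s k := expect_pos (fun k _ => hs k) univ_nonempty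
  calc 𝔼 k, log (s k) ≤ 𝔼 k, (s k / (𝔼 l, s l) + (log (𝔼 l, s l) - 1)) := by
        refine expect_le_expect fun k _ => ?_
        have := log_le_sub_one_of_pos (div_pos (hs k) hE)
        rw [log_div (hs k).ne' hE.ne'] at this
        linarith
    _ = log (𝔼 k, s k) := by
        rw [expect_add_distrib, ← expect_div, Fintype.expect_const, div_self hE.ne']
        ring

variable {V α β γ κ κ₁ κ₂ : Type*} [Fintype V] [DecidableEq γ]
variable [Fintype κ] [DecidableEq κ]
variable [Fintype κ₁] [DecidableEq κ₁] [Nonempty κ₁] [Fintype κ₂] [DecidableEq κ₂] [Nonempty κ₂]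

/-- How far `U` is from being uniform and independent of `G`: the deficit of the conditional
entropy of `U` given `G` from its largest possible value, the logarithm of the alphabet size. -/
noncomputable def secrecyDefect [Fintype γ] (P : V → ℝ) (U : V → κ) (G : V → γ) : ℝ :=
  log (Fintype.card κ) - condEnt P U G

lemma IsPMF.secrecyDefect_nonneg [Fintype γ] {P : V → ℝ} (hP : IsPMF P) (U : V → κ)
    (G : V → γ) : 0 ≤ secrecyDefect P U G :=
  sub_nonneg.2 <| (hP.condEnt_le_entRV U G).trans (hP.entRV_le_log_card U)

lemma IsPMF.mutInfo_le_secrecyDefect [Fintype γ] {P : V → ℝ} (hP : IsPMF P) (U : V → κ)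
    (G : V → γ) : mutInfo P U G ≤ secrecyDefect P U G := by
  rw [mutInfo, secrecyDefect, condEnt]
  linarith [hP.entRV_le_log_card U]

lemma IsPMF.secrecyDefect_eq_mean [Fintype γ] {P : V → ℝ} (hP : IsPMF P) (U : V → κ)
    (G : V → γ) : secrecyDefect P U G = mean P fun v => log (Fintype.card κ *
      distOf P (fun w => (U w, G w)) (U v, G v) / distOf P G (G v)) := by
  rw [secrecyDefect, condEnt_eq_mean_condSurprisal, ← hP.mean_const (log _), ← mean_sub]
  refine mean_congr hP.1 fun v hv => ?_
  have hκ : (0 : ℝ) < Fintype.card κ := by exact_mod_cast Fintype.card_pos_iff.2 ⟨U v⟩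
  have hU := distOf_pos hP.1 (fun w => (U w, G w)) hv
  rw [log_div (mul_pos hκ hU).ne' (distOf_pos hP.1 G hv).ne', log_mul hκ.ne' hU.ne',
    condSurprisal, surprisal, surprisal]
  ring

variable [DecidableEq α] [DecidableEq β]

/-- A bound for the leakage about `G` caused by revealing an `M`-valued random bin index of `U`. -/
noncomputable def binningLoss (P : V → ℝ) (U : V → α) (G : V → γ) (M : ℝ) : ℝ :=
  mean P fun v => log (1 + M * exp (-condSurprisal P U G v))

lemma binningLoss_congr_left (P : V → ℝ) {A : V → α} {B : V → β} (G : V → γ) (M : ℝ)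
    (h : ∀ v w, A v = A w ↔ B v = B w) : binningLoss P A G M = binningLoss P B G M := by
  have hpair : surprisal P (fun v => (A v, G v)) = surprisal P (fun v => (B v, G v)) :=
    surprisal_congr P fun v w => by simp only [Prod.mk.injEq, h]
  simp only [binningLoss, condSurprisal, hpair]

variable [Fintype α] [Fintype β]

lemma expect_collision_mul_collision_le (a a' : α) (b b' : β) :
    𝔼 k : (α → κ₁) × (β → κ₂),
        (if k.1 a = k.1 a' then (1 : ℝ) else 0) * (if k.2 b = k.2 b' then 1 else 0) ≤
      ((if a = a' then 1 else 0) + (Fintype.card κ₁ : ℝ)⁻¹) *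
        ((if b = b' then 1 else 0) + (Fintype.card κ₂ : ℝ)⁻¹) := by
  rw [← univ_product_univ, expect_product, ← expect_mul_expect univ univ
    (fun k₁ : α → κ₁ => if k₁ a = k₁ a' then (1 : ℝ) else 0) fun k₂ : β → κ₂ =>
      if k₂ b = k₂ b' then 1 else 0]
  refine mul_le_mul (expect_collision_le a a') (expect_collision_le b b') ?_ (by positivity)
  exact expect_nonneg fun k _ => by positivity

lemma expect_distOf_bins_le {P : V → ℝ} (hP : ∀ v, 0 ≤ P v) (A : V → α) (B : V → β) (G : V → γ)
    (v : V) :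
    𝔼 k : (α → κ₁) × (β → κ₂), distOf P (fun w => ((k.1 (A w), k.2 (B w)), G w))
        ((k.1 (A v), k.2 (B v)), G v) ≤
      distOf P (fun w => ((A w, B w), G w)) ((A v, B v), G v)
        + (Fintype.card κ₂ : ℝ)⁻¹ * distOf P (fun w => (A w, G w)) (A v, G v)
        + (Fintype.card κ₁ : ℝ)⁻¹ * distOf P (fun w => (B w, G w)) (B v, G v)
        + (Fintype.card κ₁ : ℝ)⁻¹ * (Fintype.card κ₂ : ℝ)⁻¹ * distOf P G (G v) := by
  simp only [distOf, mul_sum, ← sum_add_distrib]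
  rw [expect_sum_comm]
  refine sum_le_sum fun w _ => ?_
  by_cases hG : G w = G v
  · have hcoll := mul_le_mul_of_nonneg_left (expect_collision_mul_collision_le (κ₁ := κ₁)
      (κ₂ := κ₂) (A w) (A v) (B w) (B v)) (hP w)
    rw [mul_expect] at hcoll
    refine (expect_congr rfl fun k _ => ?_).le.trans (hcoll.trans_eq ?_)
    · by_cases hA : k.1 (A w) = k.1 (A v) <;> simp [hA, hG]
    · by_cases hA : A w = A v <;> by_cases hB : B w = B v <;> simp [hA, hB, hG] <;> ring
  · simp [hG]

lemma log_one_add_add_add_le {x y z : ℝ} (hx : 0 ≤ x) (hy : 0 ≤ y) (hz : 0 ≤ z) :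
    log (1 + x + y + z) ≤ log (1 + x) + log (1 + y) + log (1 + z) := by
  rw [← log_mul (by positivity) (by positivity), ← log_mul (by positivity) (by positivity)]
  refine log_le_log (by positivity) ?_
  have := mul_nonneg hx hy
  nlinarith [mul_nonneg hy hz, mul_nonneg hx hz, mul_nonneg this hz]

lemma expect_log_bins_le {P : V → ℝ} (hP : ∀ v, 0 ≤ P v) (A : V → α) (B : V → β) (G : V → γ)
    {v : V} (hv : 0 < P v) :
    𝔼 k : (α → κ₁) × (β → κ₂), log (Fintype.card (κ₁ × κ₂) *
        distOf P (fun w => ((k.1 (A w), k.2 (B w)), G w)) ((k.1 (A v), k.2 (B v)), G v) /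
          distOf P G (G v)) ≤
      log (1 + Fintype.card κ₁ * Fintype.card κ₂ *
          exp (-condSurprisal P (fun w => (A w, B w)) G v))
        + log (1 + Fintype.card κ₁ * exp (-condSurprisal P A G v))
        + log (1 + Fintype.card κ₂ * exp (-condSurprisal P B G v)) := by
  have hG := distOf_pos hP G hv
  have hpos (k : (α → κ₁) × (β → κ₂)) :=
    distOf_pos hP (fun w => ((k.1 (A w), k.2 (B w)), G w)) hv
  rw [Fintype.card_prod, Nat.cast_mul]
  refine (expect_log_le_log_expect fun k => by have := hpos k; positivity).trans
    (le_trans (log_le_log (expect_pos (fun k _ => by have := hpos k; positivity) univ_nonempty) ?_)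
      (log_one_add_add_add_le (by positivity) (by positivity) (by positivity)))
  rw [← expect_div, ← mul_expect, div_le_iff₀ hG]
  calc (Fintype.card κ₁ * Fintype.card κ₂ : ℝ) * 𝔼 k : (α → κ₁) × (β → κ₂),
        distOf P (fun w => ((k.1 (A w), k.2 (B w)), G w)) ((k.1 (A v), k.2 (B v)), G v)
      ≤ _ := mul_le_mul_of_nonneg_left (expect_distOf_bins_le hP A B G v) (by positivity)
    _ = _ := by
        rw [distOf_prod_mk_eq hP A G hv, distOf_prod_mk_eq hP B G hv,
          distOf_prod_mk_eq hP (fun w => (A w, B w)) G hv]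
        field_simp
        ring

lemma IsPMF.expect_secrecyDefect_bins_le [Fintype γ] {P : V → ℝ} (hP : IsPMF P) (A : V → α)
    (B : V → β) (G : V → γ) :
    𝔼 k : (α → κ₁) × (β → κ₂), secrecyDefect P (fun v => (k.1 (A v), k.2 (B v))) G ≤
      binningLoss P (fun v => (A v, B v)) G (Fintype.card κ₁ * Fintype.card κ₂)
        + binningLoss P A G (Fintype.card κ₁) + binningLoss P B G (Fintype.card κ₂) := by
  simp only [hP.secrecyDefect_eq_mean, binningLoss, ← mean_add]
  rw [expect_mean_comm]
  exact mean_mono hP.1 fun v hv => expect_log_bins_le hP.1 A B G hv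

end Secrecy

section Iid

variable {V α β γ : Type*}

/-- The joint law of `n` independent draws from `p`. -/
noncomputable def iidLaw (p : V → ℝ) (n : ℕ) (v : Fin n → V) : ℝ := ∏ i, p (v i)

lemma iidLaw_nonneg {p : V → ℝ} (hp : ∀ v, 0 ≤ p v) (n : ℕ) (v : Fin n → V) :
    0 ≤ iidLaw p n v :=
  prod_nonneg fun i _ => hp (v i)

lemma pos_of_iidLaw_pos {p : V → ℝ} (hp : ∀ v, 0 ≤ p v) {n : ℕ} {v : Fin n → V}
    (hv : 0 < iidLaw p n v) (i : Fin n) : 0 < p (v i) :=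
  (hp _).lt_of_ne fun h => hv.ne' <| prod_eq_zero (mem_univ i) h.symm

variable [Fintype V]

/-- The variance of `s` under the weights `p`. -/
noncomputable def variance (p s : V → ℝ) : ℝ := mean p fun v => (s v - mean p s) ^ 2

lemma mean_iidLaw_prod (p : V → ℝ) {n : ℕ} (s : Fin n → V → ℝ) :
    mean (iidLaw p n) (fun v => ∏ i, s i (v i)) = ∏ i, mean p (s i) := by
  simp only [mean, iidLaw, ← prod_mul_distrib, Fintype.prod_sum]

lemma isPMF_iidLaw {p : V → ℝ} (hp : IsPMF p) (n : ℕ) : IsPMF (iidLaw p n) :=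
  ⟨iidLaw_nonneg hp.1 n, by
    simpa [mean, hp.2] using mean_iidLaw_prod p fun (_ : Fin n) _ => 1⟩

lemma mean_sum {W ι : Type*} [Fintype W] (p : W → ℝ) (t : Finset ι) (s : ι → W → ℝ) :
    mean p (fun v => ∑ i ∈ t, s i v) = ∑ i ∈ t, mean p (s i) := by
  simp only [mean, mul_sum]
  exact sum_comm

lemma IsPMF.mean_iidLaw_mul {p : V → ℝ} (hp : IsPMF p) {n : ℕ} {t : V → ℝ} (ht : mean p t = 0)
    (i j : Fin n) : mean (iidLaw p n) (fun v => t (v i) * t (v j)) =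
      if i = j then mean p (fun v => t v ^ 2) else 0 := by
  have hfactor (v : Fin n → V) : t (v i) * t (v j) =
      ∏ l, (if l = i then t (v l) else 1) * if l = j then t (v l) else 1 := by
    rw [prod_mul_distrib, prod_ite_eq', prod_ite_eq', if_pos (mem_univ i), if_pos (mem_univ j)]
  simp only [hfactor]
  rw [mean_iidLaw_prod p fun l w => (if l = i then t w else 1) * if l = j then t w else 1]
  split_ifs with hij
  · subst hij
    rw [prod_eq_single i (fun l _ hl => by simp [hl, hp.mean_const]) (by simp)]
    simp [sq]
  · exact prod_eq_zero (mem_univ i) (by simpa [hij] using ht)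

lemma IsPMF.mean_iidLaw_sum_sub_sq {p : V → ℝ} (hp : IsPMF p) (n : ℕ) (s : V → ℝ) :
    mean (iidLaw p n) (fun v => (∑ i, s (v i) - n * mean p s) ^ 2) = n * variance p s := by
  have hcentered : mean p (fun v => s v - mean p s) = 0 := by
    rw [mean_sub, hp.mean_const, sub_self]
  have hsq (v : Fin n → V) : (∑ i, s (v i) - n * mean p s) ^ 2 =
      ∑ i, ∑ j, (s (v i) - mean p s) * (s (v j) - mean p s) := by
    rw [← sum_mul_sum, ← sq]
    simp
  simp only [hsq, mean_sum, hp.mean_iidLaw_mul hcentered]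
  simp [variance]

lemma IsPMF.probOf_iidLaw_lt_sum_le {p : V → ℝ} (hp : IsPMF p) (s : V → ℝ) {n : ℕ} (hn : 0 < n)
    {σ : ℝ} (hσ : 0 < σ) :
    probOf (iidLaw p n) (fun v => n * (mean p s + σ) < ∑ i, s (v i)) ≤
      variance p s / σ ^ 2 / n := by
  have hmarkov := mul_probOf_le_mean (c := (n * σ) ^ 2) (isPMF_iidLaw hp n).1
    (s := fun v => (∑ i, s (v i) - n * mean p s) ^ 2) (fun v => sq_nonneg _)
    (E := fun v => n * (mean p s + σ) < ∑ i, s (v i)) fun v hv =>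
      pow_le_pow_left₀ (by positivity) (by linarith) 2
  rw [hp.mean_iidLaw_sum_sub_sq, mul_comm, ← le_div_iff₀ (by positivity)] at hmarkov
  refine hmarkov.trans_eq ?_
  field_simp

variable [DecidableEq α] [DecidableEq β] [DecidableEq γ]

lemma distOf_iidLaw (p : V → ℝ) {n : ℕ} (A : V → α) (a : Fin n → α) :
    distOf (iidLaw p n) (A ∘ ·) a = ∏ i, distOf p A (a i) := by
  simp only [distOf, Fintype.prod_sum, iidLaw, prod_ite_zero, funext_iff, mem_univ, true_imp_iff,
    Function.comp_apply]

lemma surprisal_iidLaw {p : V → ℝ} (hp : ∀ v, 0 ≤ p v) {n : ℕ} (A : V → α) {v : Fin n → V}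
    (hv : 0 < iidLaw p n v) :
    surprisal (iidLaw p n) (A ∘ ·) v = ∑ i, surprisal p A (v i) := by
  simp only [surprisal, distOf_iidLaw, sum_neg_distrib, Function.comp_apply]
  rw [log_prod fun i _ => (distOf_pos hp A (pos_of_iidLaw_pos hp hv i)).ne']

lemma condSurprisal_iidLaw {p : V → ℝ} (hp : ∀ v, 0 ≤ p v) {n : ℕ} (A : V → α) (C : V → γ)
    {v : Fin n → V} (hv : 0 < iidLaw p n v) :
    condSurprisal (iidLaw p n) (A ∘ ·) (C ∘ ·) v =
      ∑ i, condSurprisal p A C (v i) := by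
  have hpair : surprisal (iidLaw p n) (fun v => (A ∘ v, C ∘ v)) =
      surprisal (iidLaw p n) ((fun v => (A v, C v)) ∘ ·) :=
    surprisal_congr _ fun v w => by
      simp only [Prod.mk.injEq, funext_iff, Function.comp_apply, forall_and]
  rw [condSurprisal, hpair, surprisal_iidLaw hp (fun v => (A v, C v)) hv,
    surprisal_iidLaw hp C hv, ← sum_sub_distrib]
  rfl

variable [Fintype α] [Fintype β] [Fintype γ]

/-- The number of bins used for blocks of length `n` at rate `R`. -/
noncomputable def numBins (R : ℝ) (n : ℕ) : ℕ := ⌈exp (n * R)⌉₊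

instance (R : ℝ) (n : ℕ) : NeZero (numBins R n) := ⟨(Nat.ceil_pos.2 (exp_pos _)).ne'⟩

lemma exp_le_numBins (R : ℝ) (n : ℕ) : exp (n * R) ≤ numBins R n := Nat.le_ceil _

lemma numBins_le_two_mul_exp {R : ℝ} (hR : 0 ≤ R) (n : ℕ) :
    (numBins R n : ℝ) ≤ 2 * exp (n * R) :=
  Nat.ceil_le_two_mul <| by linarith [one_le_exp (show 0 ≤ n * R by positivity)]

lemma IsPMF.exists_expect_probOf_binDecoder_ne_le [Nonempty α] {p : V → ℝ} (hp : IsPMF p)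
    (A : V → α) (B : V → β) {R : ℝ} (hR : condEnt p A B < R) :
    ∃ C, ∀ n : ℕ, 0 < n → ∃ t, 𝔼 k : (Fin n → α) → Fin (numBins R n),
      probOf (iidLaw p n) (fun v =>
        binDecoder (iidLaw p n) (A ∘ ·) (B ∘ ·) t k (B ∘ v) (k (A ∘ v)) ≠ A ∘ v) ≤ C / n := by
  set H := condEnt p A B
  set σ := (R - H) / 2 with hσ_def
  have hσ : 0 < σ := by linarith
  refine ⟨variance p (condSurprisal p A B) / σ ^ 2 + 1 / σ, fun n hn =>
    ⟨n * (H + σ), ?_⟩⟩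
  refine ((isPMF_iidLaw hp n).expect_probOf_binDecoder_ne_le _ _ _).trans ?_
  rw [add_div, Fintype.card_fin]
  refine add_le_add ?_ ?_
  · refine le_trans (probOf_mono (iidLaw_nonneg hp.1 n) fun v hv h => ?_)
      (hp.probOf_iidLaw_lt_sum_le (condSurprisal p A B) hn hσ)
    rwa [← condEnt_eq_mean_condSurprisal, ← condSurprisal_iidLaw hp.1 A B hv]
  · calc exp (n * (H + σ)) / numBins R n ≤ exp (n * (H + σ)) / exp (n * R) := by
          gcongr
          exact exp_le_numBins R n
      _ = (exp (n * σ))⁻¹ := by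
          rw [← exp_sub, ← exp_neg]
          congr 1
          rw [hσ_def]
          ring
      _ ≤ (σ * n)⁻¹ := by
          refine inv_anti₀ (by positivity) ?_
          linarith [add_one_le_exp (n * σ)]
      _ = 1 / σ / n := by rw [div_div, one_div]

lemma log_one_add_mul_exp_sub_le {K x c : ℝ} (hK : 0 ≤ K) (hc : 0 < c) :
    log (1 + K * exp (x - c)) ≤ log (1 + K) + x ^ 2 / (4 * c) := by
  rw [← log_exp (x ^ 2 / (4 * c)), ← log_mul (by positivity) (exp_pos _).ne']
  refine log_le_log (by positivity) ?_
  have hone : 1 ≤ exp (x ^ 2 / (4 * c)) := one_le_exp (by positivity)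
  have hexp : exp (x - c) ≤ exp (x ^ 2 / (4 * c)) := by
    rw [exp_le_exp, le_div_iff₀ (by positivity)]
    nlinarith [sq_nonneg (x - 2 * c)]
  nlinarith

lemma IsPMF.exists_binningLoss_iidLaw_le {p : V → ℝ} (hp : IsPMF p) (U : V → α) (G : V → γ)
    {R K : ℝ} (hR : R < condEnt p U G) (hK : 0 ≤ K) :
    ∃ C, ∀ n : ℕ, 0 < n → ∀ M : ℝ, 0 ≤ M → M ≤ K * exp (n * R) →
      binningLoss (iidLaw p n) (U ∘ ·) (G ∘ ·) M ≤ C := by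
  set s := condSurprisal p U G with hs
  rw [condEnt_eq_mean_condSurprisal, ← hs] at hR
  set σ := mean p s - R with hσ_def
  have hσ : 0 < σ := sub_pos.2 hR
  refine ⟨log (1 + K) + variance p s / (4 * σ), fun n hn M hM₀ hM => ?_⟩
  calc binningLoss (iidLaw p n) (U ∘ ·) (G ∘ ·) M
      ≤ mean (iidLaw p n) fun v =>
          log (1 + K) + (4 * (n * σ))⁻¹ * (∑ i, s (v i) - n * mean p s) ^ 2 := by
        refine mean_mono (iidLaw_nonneg hp.1 n) fun v hv => ?_
        rw [condSurprisal_iidLaw hp.1 U G hv, ← hs]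
        calc log (1 + M * exp (-∑ i, s (v i)))
            ≤ log (1 + K * exp (n * mean p s - ∑ i, s (v i) - n * σ)) := by
              refine log_le_log (by positivity) (add_le_add_right ?_ 1)
              calc M * exp (-∑ i, s (v i)) ≤ K * exp (n * R) * exp (-∑ i, s (v i)) := by gcongr
                _ = K * exp (n * mean p s - ∑ i, s (v i) - n * σ) := by
                  rw [mul_assoc, ← exp_add, hσ_def]
                  ring_nf
          _ ≤ log (1 + K) + (n * mean p s - ∑ i, s (v i)) ^ 2 / (4 * (n * σ)) :=
              log_one_add_mul_exp_sub_le hK (by positivity)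
          _ = _ := by ring
    _ = log (1 + K) + variance p s / (4 * σ) := by
        rw [mean_add, (isPMF_iidLaw hp n).mean_const, mean_const_mul, hp.mean_iidLaw_sum_sub_sq]
        field_simp

end Iid

section Exchange

variable {V α β γ κ₁ κ₂ μ₁ μ₂ : Type*}

/-- A simultaneous exchange of data: the holder of `a : α` announces `binA a`, the holder of
`b : β` announces `binB b`, and each of them estimates the value held by the other one. -/
structure ExchangeScheme (α β κ₁ κ₂ : Type*) where
  binA : α → κ₁
  binB : β → κ₂
  decodeA : β → κ₁ → α
  decodeB : α → κ₂ → β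

namespace ExchangeScheme

/-- The bins announced on the data `(A v, B v)`, that is, all that an eavesdropper sees. -/
def bins (S : ExchangeScheme α β κ₁ κ₂) (A : V → α) (B : V → β) (v : V) : κ₁ × κ₂ :=
  (S.binA (A v), S.binB (B v))

/-- The probability that one of the two estimates is wrong. -/
noncomputable def errorProb [Fintype V] (S : ExchangeScheme α β κ₁ κ₂) (P : V → ℝ) (A : V → α)
    (B : V → β) : ℝ :=
  probOf P fun v => S.decodeA (B v) (S.binA (A v)) ≠ A v ∨ S.decodeB (A v) (S.binB (B v)) ≠ B v

/-- Relabelling of the bins. -/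
noncomputable def mapBins [Nonempty κ₁] [Nonempty κ₂] (S : ExchangeScheme α β κ₁ κ₂)
    (e₁ : κ₁ → μ₁) (e₂ : κ₂ → μ₂) : ExchangeScheme α β μ₁ μ₂ where
  binA a := e₁ (S.binA a)
  binB b := e₂ (S.binB b)
  decodeA b m := S.decodeA b (Function.invFun e₁ m)
  decodeB a m := S.decodeB a (Function.invFun e₂ m)

lemma errorProb_mapBins [Fintype V] [Nonempty κ₁] [Nonempty κ₂] (S : ExchangeScheme α β κ₁ κ₂)
    {e₁ : κ₁ → μ₁} {e₂ : κ₂ → μ₂} (he₁ : e₁.Injective) (he₂ : e₂.Injective) (P : V → ℝ)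
    (A : V → α) (B : V → β) : (S.mapBins e₁ e₂).errorProb P A B = S.errorProb P A B := by
  simp only [errorProb, mapBins, Function.leftInverse_invFun he₁ _,
    Function.leftInverse_invFun he₂ _]

lemma mapBins_bins_eq_iff [Nonempty κ₁] [Nonempty κ₂] (S : ExchangeScheme α β κ₁ κ₂)
    {e₁ : κ₁ → μ₁} {e₂ : κ₂ → μ₂} (he₁ : e₁.Injective) (he₂ : e₂.Injective)
    (A : V → α) (B : V → β) (v w : V) :
    (S.mapBins e₁ e₂).bins A B v = (S.mapBins e₁ e₂).bins A B w ↔ S.bins A B v = S.bins A B w := by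
  simp only [bins, mapBins, Prod.mk.injEq, he₁.eq_iff, he₂.eq_iff]

/-- The scheme in which both data are binned by `k` and estimated by `binDecoder` with
thresholds `t₁` and `t₂`. -/
noncomputable def binning [Fintype V] [Fintype α] [Fintype β] [DecidableEq α] [DecidableEq β]
    [Nonempty α] [Nonempty β] (P : V → ℝ) (A : V → α) (B : V → β) (t₁ t₂ : ℝ)
    (k : (α → κ₁) × (β → κ₂)) : ExchangeScheme α β κ₁ κ₂ where
  binA := k.1
  binB := k.2
  decodeA := binDecoder P A B t₁ k.1
  decodeB := binDecoder P B A t₂ k.2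

lemma exists_same_alphabet [Fintype V] [Nonempty α] [Nonempty β] [Fintype γ] [DecidableEq γ]
    {M₁ M₂ : ℕ} (S : ExchangeScheme α β (Fin M₁) (Fin M₂)) (P : V → ℝ) (A : V → α) (B : V → β)
    (G : V → γ) :
    ∃ M, ∃ T : ExchangeScheme α β (Fin M) (Fin M),
      T.errorProb P A B = S.errorProb P A B ∧
        mutInfo P (T.bins A B) G = mutInfo P (S.bins A B) G := by
  have : Nonempty (Fin M₁) := ‹Nonempty α›.map S.binA
  have : Nonempty (Fin M₂) := ‹Nonempty β›.map S.binB
  have he₁ := Fin.castLE_injective (le_max_left M₁ M₂)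
  have he₂ := Fin.castLE_injective (le_max_right M₁ M₂)
  exact ⟨_, S.mapBins _ _, S.errorProb_mapBins he₁ he₂ P A B,
    mutInfo_congr_left _ _ (S.mapBins_bins_eq_iff he₁ he₂ A B)⟩

end ExchangeScheme

lemma expect_errorProb_binning_le [Fintype V] [Fintype α] [Fintype β] [DecidableEq α]
    [DecidableEq β] [Nonempty α] [Nonempty β] [Fintype κ₁] [Fintype κ₂] [Nonempty κ₁]
    [Nonempty κ₂] {P : V → ℝ} (hP : ∀ v, 0 ≤ P v) (A : V → α) (B : V → β) (t₁ t₂ : ℝ) :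
    𝔼 k : (α → κ₁) × (β → κ₂), (ExchangeScheme.binning P A B t₁ t₂ k).errorProb P A B ≤
      (𝔼 k, probOf P fun v => binDecoder P A B t₁ k (B v) ((k : α → κ₁) (A v)) ≠ A v) +
        𝔼 k, probOf P fun v => binDecoder P B A t₂ k (A v) ((k : β → κ₂) (B v)) ≠ B v := by
  refine (expect_le_expect fun k _ => probOf_or_le hP _ _).trans_eq ?_
  rw [expect_add_distrib, ← univ_product_univ, expect_product, expect_product]
  simp [ExchangeScheme.binning]

end Exchange

section Achievability

variable {V α β γ : Type*} [Fintype V] [Fintype α] [Fintype β] [Fintype γ]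
variable [DecidableEq α] [DecidableEq β] [DecidableEq γ]

lemma IsPMF.exists_binning_rates {p : V → ℝ} (hp : IsPMF p) {A : V → α} {B : V → β} {G : V → γ}
    (h : entRV p G < mutInfo p A B) :
    ∃ R₁ R₂, condEnt p A B < R₁ ∧ condEnt p B A < R₂ ∧ R₁ < condEnt p A G ∧
      R₂ < condEnt p B G ∧ R₁ + R₂ < condEnt p (fun v => (A v, B v)) G := by
  have hswap : entRV p (fun v => (B v, A v)) = entRV p fun v => (A v, B v) :=
    entRV_congr p fun v w => by simp only [Prod.mk.injEq, and_comm]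
  have hA : entRV p A ≤ entRV p fun v => (A v, G v) :=
    entRV_le_entRV_of_imp hp.1 fun v w h => (Prod.ext_iff.1 h).1
  have hB : entRV p B ≤ entRV p fun v => (B v, G v) :=
    entRV_le_entRV_of_imp hp.1 fun v w h => (Prod.ext_iff.1 h).1
  have hAB : entRV p (fun v => (A v, B v)) ≤ entRV p fun v => ((A v, B v), G v) :=
    entRV_le_entRV_of_imp hp.1 fun v w h => (Prod.ext_iff.1 h).1
  obtain ⟨δ, hδ, hδ_pos⟩ : ∃ δ, mutInfo p A B - entRV p G = 3 * δ ∧ 0 < δ :=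
    ⟨(mutInfo p A B - entRV p G) / 3, by ring, by linarith⟩
  refine ⟨condEnt p A B + δ, condEnt p B A + δ, by linarith, by linarith, ?_, ?_, ?_⟩
  all_goals
    simp only [condEnt, mutInfo] at *
    linarith

lemma IsPMF.exists_expect_errorProb_binning_le [Nonempty α] [Nonempty β] {p : V → ℝ}
    (hp : IsPMF p) (A : V → α) (B : V → β) {R₁ R₂ : ℝ} (hA : condEnt p A B < R₁)
    (hB : condEnt p B A < R₂) :
    ∃ C, ∀ n : ℕ, 0 < n → ∃ t₁ t₂,
      𝔼 k : ((Fin n → α) → Fin (numBins R₁ n)) × ((Fin n → β) → Fin (numBins R₂ n)),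
        (ExchangeScheme.binning (iidLaw p n) (A ∘ ·) (B ∘ ·) t₁ t₂ k).errorProb
          (iidLaw p n) (A ∘ ·) (B ∘ ·) ≤ C / n := by
  obtain ⟨C₁, hC₁⟩ := hp.exists_expect_probOf_binDecoder_ne_le A B hA
  obtain ⟨C₂, hC₂⟩ := hp.exists_expect_probOf_binDecoder_ne_le B A hB
  refine ⟨C₁ + C₂, fun n hn => ?_⟩
  obtain ⟨t₁, ht₁⟩ := hC₁ n hn
  obtain ⟨t₂, ht₂⟩ := hC₂ n hn
  refine ⟨t₁, t₂, (expect_errorProb_binning_le (iidLaw_nonneg hp.1 n) _ _ t₁ t₂).trans ?_⟩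
  rw [add_div]
  exact add_le_add ht₁ ht₂

lemma IsPMF.exists_expect_secrecyDefect_bins_le {p : V → ℝ} (hp : IsPMF p) (A : V → α)
    (B : V → β) (G : V → γ) {R₁ R₂ : ℝ} (hR₁ : 0 ≤ R₁) (hR₂ : 0 ≤ R₂)
    (hAG : R₁ < condEnt p A G) (hBG : R₂ < condEnt p B G)
    (hABG : R₁ + R₂ < condEnt p (fun v => (A v, B v)) G) :
    ∃ C, ∀ n : ℕ, 0 < n →
      𝔼 k : ((Fin n → α) → Fin (numBins R₁ n)) × ((Fin n → β) → Fin (numBins R₂ n)),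
        secrecyDefect (iidLaw p n) (fun v => (k.1 (A ∘ v), k.2 (B ∘ v))) (G ∘ ·) ≤ C := by
  obtain ⟨L, hL⟩ := hp.exists_binningLoss_iidLaw_le _ G hABG (K := 4) (by norm_num)
  obtain ⟨L₁, hL₁⟩ := hp.exists_binningLoss_iidLaw_le A G hAG (K := 2) (by norm_num)
  obtain ⟨L₂, hL₂⟩ := hp.exists_binningLoss_iidLaw_le B G hBG (K := 2) (by norm_num)
  refine ⟨L + L₁ + L₂, fun n hn => ?_⟩
  have hM₁ := numBins_le_two_mul_exp hR₁ n
  have hM₂ := numBins_le_two_mul_exp hR₂ n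
  have hprod : (numBins R₁ n * numBins R₂ n : ℝ) ≤ 4 * exp (n * (R₁ + R₂)) := by
    calc (numBins R₁ n * numBins R₂ n : ℝ) ≤ 2 * exp (n * R₁) * (2 * exp (n * R₂)) := by gcongr
      _ = 4 * exp (n * (R₁ + R₂)) := by
        rw [mul_add, exp_add]
        ring
  have hpair := hL n hn _ (by positivity) hprod
  rw [binningLoss_congr_left (B := fun v : Fin n → V => (A ∘ v, B ∘ v)) _ _ _ fun v w => by
    simp only [Prod.mk.injEq, funext_iff, Function.comp_apply, forall_and]] at hpair
  refine ((isPMF_iidLaw hp n).expect_secrecyDefect_bins_le _ _ _).trans ?_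
  simp only [Fintype.card_fin]
  exact add_le_add_three hpair (hL₁ n hn _ (Nat.cast_nonneg _) hM₁)
    (hL₂ n hn _ (Nat.cast_nonneg _) hM₂)

lemma IsPMF.exists_exchangeScheme [Nonempty α] [Nonempty β] {p : V → ℝ} (hp : IsPMF p)
    {A : V → α} {B : V → β} {G : V → γ} (h : entRV p G < mutInfo p A B) {ε : ℝ} (hε : 0 < ε) :
    ∃ n M : ℕ, 0 < n ∧ ∃ S : ExchangeScheme (Fin n → α) (Fin n → β) (Fin M) (Fin M),
      S.errorProb (iidLaw p n) (A ∘ ·) (B ∘ ·) ≤ ε ∧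
      mutInfo (iidLaw p n) (S.bins (A ∘ ·) (B ∘ ·)) (G ∘ ·) ≤ n * ε := by
  obtain ⟨R₁, R₂, hA, hB, hAG, hBG, hABG⟩ := hp.exists_binning_rates h
  obtain ⟨C₁, hC₁⟩ := hp.exists_expect_errorProb_binning_le A B hA hB
  obtain ⟨C₂, hC₂⟩ := hp.exists_expect_secrecyDefect_bins_le A B G
    ((condEnt_nonneg hp.1 A B).trans hA.le) ((condEnt_nonneg hp.1 B A).trans hB.le) hAG hBG hABG
  obtain ⟨n, hn⟩ := exists_nat_gt (max 0 ((C₁ + C₂) / ε))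
  obtain ⟨hn₀, hnC⟩ := max_lt_iff.1 hn
  have hn_pos : 0 < n := by exact_mod_cast hn₀
  obtain ⟨t₁, t₂, herr⟩ := hC₁ n hn_pos
  have hsum := add_le_add herr (div_le_div_of_nonneg_right (hC₂ n hn_pos) hn₀.le)
  rw [expect_div, ← expect_add_distrib, ← add_div] at hsum
  obtain ⟨k, -, hk⟩ := exists_le_of_expect_le univ_nonempty <|
    hsum.trans ((div_le_iff₀ hn₀).2 ((div_lt_iff₀' hε).1 hnC).le)
  have hdefect_nonneg := (isPMF_iidLaw hp n).secrecyDefect_nonneg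
    (fun v => (k.1 (A ∘ v), k.2 (B ∘ v))) (G ∘ ·)
  obtain ⟨M, S, hS_err, hS_leak⟩ := (ExchangeScheme.binning (iidLaw p n) (A ∘ ·) (B ∘ ·)
    t₁ t₂ k).exists_same_alphabet (iidLaw p n) (A ∘ ·) (B ∘ ·) (G ∘ ·)
  refine ⟨n, M, hn_pos, S, hS_err.trans_le ?_, hS_leak.trans_le ?_⟩
  · exact (le_add_of_nonneg_right (div_nonneg hdefect_nonneg hn₀.le)).trans hk
  · rw [← div_le_iff₀' hn₀]
    exact (div_le_div_of_nonneg_right ((isPMF_iidLaw hp n).mutInfo_le_secrecyDefect _ _)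
      hn₀.le).trans ((le_add_of_nonneg_left (probOf_nonneg (iidLaw_nonneg hp.1 n) _)).trans hk)

end Achievability

section DeterministicLaw

variable {V R α γ : Type*} [Fintype V] [Fintype R] [DecidableEq R]

/-- The joint law of a random variable of law `P` and its image under `D`. -/
def graphLaw (P : V → ℝ) (D : V → R) (w : V × R) : ℝ := if w.2 = D w.1 then P w.1 else 0

lemma mean_graphLaw (P : V → ℝ) (D : V → R) (s : V × R → ℝ) :
    mean (graphLaw P D) s = mean P fun v => s (v, D v) := by
  simp [mean, graphLaw, Fintype.sum_prod_type]

lemma probOf_graphLaw (P : V → ℝ) (D : V → R) (E : V × R → Prop) :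
    probOf (graphLaw P D) E = probOf P fun v => E (v, D v) := by
  simp only [probOf_eq_mean, mean_graphLaw]

lemma distOf_graphLaw [DecidableEq α] (P : V → ℝ) (D : V → R) (A : V × R → α) :
    distOf (graphLaw P D) A = distOf P fun v => A (v, D v) := by
  funext a
  simpa [mean, distOf] using mean_graphLaw P D fun w => if A w = a then 1 else 0

lemma mutInfo_graphLaw [Fintype α] [DecidableEq α] [Fintype γ] [DecidableEq γ] (P : V → ℝ)
    (D : V → R) (A : V × R → α) (G : V × R → γ) :
    mutInfo (graphLaw P D) A G = mutInfo P (fun v => A (v, D v)) fun v => G (v, D v) := by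
  simp only [mutInfo, entRV, distOf_graphLaw]

end DeterministicLaw

section Protocol

lemma isPMF_single {α : Type*} [Fintype α] [DecidableEq α] (a : α) :
    IsPMF (Pi.single a 1 : α → ℝ) :=
  ⟨fun b => by rw [Pi.single_apply]; positivity, by simp⟩

namespace ExchangeScheme

variable {X Y : Type*} {M : ℕ}

/-- The transcript of the two-round protocol in which Alice sends the bin of her input and then
Bob sends the bin of his. -/
def transcript (S : ExchangeScheme X Y (Fin M) (Fin M)) (x : X) (y : Y) : Fin 2 → Fin M :=
  ![S.binA x, S.binB y]

lemma transProb_single (S : ExchangeScheme X Y (Fin M) (Fin M)) (x : X) (y : Y)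
    (m : Fin 2 → Fin M) :
    transProb (fun _ x _ => Pi.single (S.binA x) 1) (fun _ y _ => Pi.single (S.binB y) 1) x y m =
      if m = S.transcript x y then 1 else 0 := by
  have hm : m = S.transcript x y ↔ m 0 = S.binA x ∧ m 1 = S.binB y := by
    simp [funext_iff, Fin.forall_fin_two, transcript]
  by_cases h : m 0 = S.binA x <;>
    simp [hm, transProb, Fin.prod_univ_two, Pi.single_apply, h]

end ExchangeScheme

variable {𝒳 𝒴 𝒵₁ 𝒵₂ 𝒢 : Type} [DecidableEq 𝒵₁] [DecidableEq 𝒵₂]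

namespace ExchangeScheme

variable {n M : ℕ}

/-- Alice's output: `f₁` evaluated at her own data and her estimate of Bob's. -/
def outputA (S : ExchangeScheme (Fin n → 𝒳) (Fin n → 𝒴) (Fin M) (Fin M)) (f₁ : 𝒳 → 𝒴 → 𝒵₁)
    (x : Fin n → 𝒳) (m : Fin 2 → Fin M) (i : Fin n) : 𝒵₁ :=
  f₁ (x i) (S.decodeB x (m 1) i)

/-- Bob's output: `f₂` evaluated at his estimate of Alice's data and his own data. -/
def outputB (S : ExchangeScheme (Fin n → 𝒳) (Fin n → 𝒴) (Fin M) (Fin M)) (f₂ : 𝒳 → 𝒴 → 𝒵₂)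
    (y : Fin n → 𝒴) (m : Fin 2 → Fin M) (i : Fin n) : 𝒵₂ :=
  f₂ (S.decodeA y (m 0) i) (y i)

/-- The transcript and the two outputs on the input blocks `v`. -/
def view (S : ExchangeScheme (Fin n → 𝒳) (Fin n → 𝒴) (Fin M) (Fin M)) (f₁ : 𝒳 → 𝒴 → 𝒵₁)
    (f₂ : 𝒳 → 𝒴 → 𝒵₂) (v : Fin n → 𝒳 × 𝒴) :
    (Fin 2 → Fin M) × (Fin n → 𝒵₁) × (Fin n → 𝒵₂) :=
  (S.transcript (Prod.fst ∘ v) (Prod.snd ∘ v),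
    S.outputA f₁ (Prod.fst ∘ v) (S.transcript (Prod.fst ∘ v) (Prod.snd ∘ v)),
    S.outputB f₂ (Prod.snd ∘ v) (S.transcript (Prod.fst ∘ v) (Prod.snd ∘ v)))

lemma jointEaves_single (S : ExchangeScheme (Fin n → 𝒳) (Fin n → 𝒴) (Fin M) (Fin M))
    (pXY : 𝒳 × 𝒴 → ℝ) (f₁ : 𝒳 → 𝒴 → 𝒵₁) (f₂ : 𝒳 → 𝒴 → 𝒵₂) :
    jointEaves pXY n 2 M (fun _ x _ => Pi.single (S.binA x) 1) (fun _ y _ => Pi.single (S.binB y) 1)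
        (fun x m => Pi.single (S.outputA f₁ x m) 1) (fun y m => Pi.single (S.outputB f₂ y m) 1) =
      graphLaw (iidLaw pXY n) (S.view f₁ f₂) := by
  funext ⟨v, m, z₁, z₂⟩
  simp only [jointEaves, transProb_single, graphLaw, view, Prod.mk.injEq, Pi.single_apply]
  change (∏ i, pXY (v i)) * (if m = S.transcript (Prod.fst ∘ v) (Prod.snd ∘ v) then 1 else 0) *
    (if z₁ = S.outputA f₁ (Prod.fst ∘ v) m then 1 else 0) *
    (if z₂ = S.outputB f₂ (Prod.snd ∘ v) m then 1 else 0) = _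
  split_ifs <;> simp_all [iidLaw]

end ExchangeScheme

variable [Fintype 𝒳] [DecidableEq 𝒳] [Fintype 𝒴] [DecidableEq 𝒴]
variable [Fintype 𝒵₁] [Fintype 𝒵₂] [Fintype 𝒢] [DecidableEq 𝒢]

lemma asympSecEavesdropper_of_exchangeScheme {pXY : 𝒳 × 𝒴 → ℝ} (hp : IsPMF pXY)
    {g : 𝒳 → 𝒴 → 𝒢} (h : ∀ ε > (0 : ℝ), ∃ n M : ℕ, 0 < n ∧
      ∃ S : ExchangeScheme (Fin n → 𝒳) (Fin n → 𝒴) (Fin M) (Fin M),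
        S.errorProb (iidLaw pXY n) (Prod.fst ∘ ·) (Prod.snd ∘ ·) ≤ ε ∧
        mutInfo (iidLaw pXY n) (S.bins (Prod.fst ∘ ·) (Prod.snd ∘ ·))
          ((fun xy => g xy.1 xy.2) ∘ ·) ≤ n * ε) (f₁ : 𝒳 → 𝒴 → 𝒵₁) (f₂ : 𝒳 → 𝒴 → 𝒵₂) :
    AsympSecEavesdropper pXY f₁ f₂ g := by
  intro ε hε
  obtain ⟨n, M, hn, S, herr, hleak⟩ := h ε hε
  refine ⟨n, 2, M, hn, fun _ x _ => Pi.single (S.binA x) 1, fun _ y _ => Pi.single (S.binB y) 1,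
    fun x m => Pi.single (S.outputA f₁ x m) 1, fun y m => Pi.single (S.outputB f₂ y m) 1,
    fun _ _ _ => isPMF_single _, fun _ _ _ => isPMF_single _, fun _ _ => isPMF_single _,
    fun _ _ => isPMF_single _, ?_, ?_⟩
  · rw [S.jointEaves_single, probOf_graphLaw]
    refine (probOf_mono (iidLaw_nonneg hp.1 n) fun v _ hne => ?_).trans herr
    contrapose! hne
    obtain ⟨hA, hB⟩ := hne
    refine Prod.ext (funext fun i => ?_) (funext fun i => ?_)
    · exact congrArg (f₁ (v i).1) (congrFun hB i)
    · exact congrArg (f₂ · (v i).2) (congrFun hA i)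
  · rw [S.jointEaves_single, mutInfo_graphLaw]
    refine (mutInfo_congr_left _ _ fun v w => ?_).le.trans hleak
    simp [ExchangeScheme.view, ExchangeScheme.transcript, ExchangeScheme.bins, funext_iff,
      Fin.forall_fin_two]

end Protocol

end RandomBinning

/-- **Theorem 3.** If `H(g(X,Y)) < I(X; Y)`, then for any functions `f₁`, `f₂`, the tuple
`(pXY, f₁, f₂, g)` is asymptotically securely computable with privacy against an
eavesdropper. -/
theorem secure_computation_eavesdropper {𝒳 𝒴 𝒵₁ 𝒵₂ 𝒢 : Type}
    [Fintype 𝒳] [DecidableEq 𝒳] [Fintype 𝒴] [DecidableEq 𝒴]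
    [Fintype 𝒵₁] [DecidableEq 𝒵₁] [Fintype 𝒵₂] [DecidableEq 𝒵₂]
    [Fintype 𝒢] [DecidableEq 𝒢]
    (pXY : 𝒳 × 𝒴 → ℝ) (hp : IsPMF pXY) (g : 𝒳 → 𝒴 → 𝒢)
    (hent : entRV pXY (fun xy => g xy.1 xy.2) < mutInfo pXY Prod.fst Prod.snd)
    (f₁ : 𝒳 → 𝒴 → 𝒵₁) (f₂ : 𝒳 → 𝒴 → 𝒵₂) :
    AsympSecEavesdropper pXY f₁ f₂ g := by
  have : Nonempty (𝒳 × 𝒴) := hp.nonempty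
  have : Nonempty 𝒳 := ‹Nonempty (𝒳 × 𝒴)›.map Prod.fst
  have : Nonempty 𝒴 := ‹Nonempty (𝒳 × 𝒴)›.map Prod.snd
  exact asympSecEavesdropper_of_exchangeScheme hp
    (fun _ hε => hp.exists_exchangeScheme hent hε) f₁ f₂
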